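/- Let 𝕏 be a σ-finite measure space and ℳ, 𝒩 Banach L^0(𝕏)-modules. Define |α|_ε := ⋁{ |Σ_{i=1}^n ω(v_i)η(w_i)| : Σ_{i=1}^n v_i ⊗ w_i = α, ω ∈ 𝔻_{ℳ*}, η ∈ 𝔻_{𝒩*} } for α ∈ ℳ ⊗ 𝒩, the supremum being over all representations of α and all ω, η in the unit discs of the duals. Then |·|_ε is a pointwise norm on ℳ ⊗ 𝒩 (i.e. |α|_ε = 0 if and only if α = 0, |α+β|_ε ≤ |α|_ε + |β|_ε, and |f·α|_ε = |f||α|_ε for every f ∈ L^0(𝕏)); moreover |v ⊗ w|_ε = |v||w| for every v ∈ ℳ and w ∈ 𝒩. -/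

import Mathlib

/-!
The value `∑ ω (v i) * η (w i)` is `(ω ⊗ η) α`, so it does not depend on the representation of `α`
(`mem_epsReps`), and `|α|_ε` is the supremum of `|(ω ⊗ η) α|` over the two dual discs. The family
is bounded by `∑ |v i| * |w i|`, and `L⁰` is Dedekind complete over a σ-finite space
(`exists_lub`), so the supremum exists; subadditivity and homogeneity are inherited from the
absolute value, multiplication by a nonnegative function commuting with suprema (`mul_lub_le`).

The two remaining properties rest on an `L⁰`-valued Hahn-Banach theorem: each `x` has a functional
`ω` in the dual disc with `ω x = |x|` (`exists_norming`). It is obtained by showing that a minimal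
sublinear map is linear (`IsSublin.exists_linear`), which avoids extending partially defined maps.
It gives `|v ⊗ w|_ε ≥ |v| |w|` at once. For definiteness, vanishing of every `(ω ⊗ η) α` gives
`∑ ω (v i) • w i = 0` for all bounded `ω`, and an induction on the number of terms, splitting off
the line spanned by `v 0` with a bounded projection, yields `α = 0` (`sum_tmul_eq_zero`).
-/

open MeasureTheory Filter Set TensorProduct

noncomputable section

namespace Paper

variable {X : Type*} [MeasurableSpace X]

/-- The space `L⁰(𝕏)` of real-valued measurable functions up to `μ`-a.e. equality. -/
abbrev L0 (μ : Measure X) : Type _ := X →ₘ[μ] ℝ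

instance (μ : Measure X) : CommRing (L0 μ) :=
  { (inferInstance : AddCommGroup (L0 μ)), (inferInstance : CommMonoid (L0 μ)) with
    left_distrib := fun a b c => AEEqFun.toGerm_injective <| by
      simp only [AEEqFun.mul_toGerm, AEEqFun.add_toGerm, mul_add]
    right_distrib := fun a b c => AEEqFun.toGerm_injective <| by
      simp only [AEEqFun.mul_toGerm, AEEqFun.add_toGerm, add_mul]
    zero_mul := fun a => AEEqFun.toGerm_injective <| by
      simp only [AEEqFun.mul_toGerm, AEEqFun.zero_toGerm, zero_mul]
    mul_zero := fun a => AEEqFun.toGerm_injective <| by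
      simp only [AEEqFun.mul_toGerm, AEEqFun.zero_toGerm, mul_zero] }

/-- The distance on `L⁰(𝕏)` inducing the topology of convergence in measure, defined through
the auxiliary finite measure `μ.toFinite` (which satisfies `μ ≪ μ.toFinite ≪ μ`). -/
noncomputable def dL0 (μ : Measure X) [SFinite μ] (f g : L0 μ) : ℝ :=
  ∫ x, min |f x - g x| 1 ∂(μ.toFinite)

/-- A Banach `L⁰(𝕏)`-module: a module over `L⁰(𝕏)` endowed with a pointwise norm, complete
with respect to the induced distance. -/
class BanachMod (μ : Measure X) [SFinite μ] (M : Type*) [AddCommGroup M]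
    [Module (L0 μ) M] where
  pn : M → L0 μ
  pn_nonneg : ∀ v : M, 0 ≤ pn v
  pn_eq_zero : ∀ v : M, pn v = 0 ↔ v = 0
  pn_add_le : ∀ v w : M, pn (v + w) ≤ pn v + pn w
  pn_smul : ∀ (f : L0 μ) (v : M), pn (f • v) = |f| * pn v
  complete : ∀ u : ℕ → M,
    (∀ ε : ℝ, 0 < ε → ∃ N : ℕ, ∀ m ≥ N, ∀ n ≥ N, dL0 μ (pn (u m - u n)) 0 < ε) →
    ∃ v : M, Tendsto (fun n => dL0 μ (pn (u n - v)) 0) atTop (nhds 0)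

/-- The pointwise norm of a Banach `L⁰(𝕏)`-module, with the measure explicit. -/
noncomputable def pn (μ : Measure X) [SFinite μ] {M : Type*} [AddCommGroup M]
    [Module (L0 μ) M] [BanachMod μ M] (v : M) : L0 μ :=
  BanachMod.pn v

/-- The distance on a Banach `L⁰(𝕏)`-module. -/
noncomputable def dM (μ : Measure X) [SFinite μ] {M : Type*} [AddCommGroup M]
    [Module (L0 μ) M] [BanachMod μ M] (v w : M) : ℝ :=
  dL0 μ (pn μ (v - w)) 0

section Defs

variable (μ : Measure X) [SFinite μ]
variable {M N : Type*} [AddCommGroup M] [Module (L0 μ) M] [BanachMod μ M]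
  [AddCommGroup N] [Module (L0 μ) N] [BanachMod μ N]

/-- The set of admissible bounds of a map between Banach `L⁰(𝕏)`-modules; the pointwise norm
`|T|` of a homomorphism is the infimum of this set. -/
def homBddSet (T : M → N) : Set (L0 μ) :=
  {g | 0 ≤ g ∧ ∀ v, pn μ (T v) ≤ g * pn μ v}

/-- A homomorphism of Banach `L⁰(𝕏)`-modules: an `L⁰(𝕏)`-linear map admitting a bound
`g ∈ L⁰(𝕏)⁺` with `|T v| ≤ g |v|` (equivalently, `L⁰(𝕏)`-linear and continuous). -/
def IsHom (T : M →ₗ[L0 μ] N) : Prop :=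
  ∃ g, g ∈ homBddSet μ (⇑T)

/-- The set of admissible bounds of an `L⁰(𝕏)`-valued map (for elements of the dual module). -/
def dualBddSet (ω : M → L0 μ) : Set (L0 μ) :=
  {g | 0 ≤ g ∧ ∀ v, |ω v| ≤ g * pn μ v}

/-- Membership in the dual module `ℳ*`: an `L⁰(𝕏)`-linear map `ω : ℳ → L⁰(𝕏)` admitting a
bound `g ∈ L⁰(𝕏)⁺` with `|ω v| ≤ g |v|`. -/
def IsDual (ω : M →ₗ[L0 μ] L0 μ) : Prop :=
  ∃ g, g ∈ dualBddSet μ (⇑ω)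

/-- Membership in the unit disc `𝔻_{ℳ*}` of the dual module: `|ω| ≤ 1`, equivalently
`|ω v| ≤ |v|` for every `v`. -/
def InDualDisc (ω : M →ₗ[L0 μ] L0 μ) : Prop :=
  ∀ v, |ω v| ≤ pn μ v

/-- The family of pointwise norms `|s - ∑_{i ∈ F ∪ G} v i|` for `G` finite disjoint from `F`,
whose `F`-indexed inf-sup being `0` defines `s = ∑_{i∈I} v i`. -/
def sumUB {I : Type*} (v : I → M) (s : M) (F : Finset I) : Set (L0 μ) :=
  {g | ∃ G : Finset I, Disjoint G F ∧ g = pn μ (s - (∑ i ∈ F, v i + ∑ i ∈ G, v i))}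

/-- `HasSumMod μ v s` means that the family `{v_i}` is summable in the Banach `L⁰(𝕏)`-module
with sum `s`, i.e. `⋀_F ⋁_G |s - ∑_{i ∈ F ∪ G} v_i| = 0` (the inner suprema being the values
of `b`, and the outer infimum being `0`). -/
def HasSumMod {I : Type*} (v : I → M) (s : M) : Prop :=
  ∃ b : Finset I → L0 μ, (∀ F, IsLUB (sumUB μ v s F) (b F)) ∧ IsGLB (Set.range b) 0

/-- A family in a Banach `L⁰(𝕏)`-module is summable if it has a sum. -/
def SummableMod {I : Type*} (v : I → M) : Prop :=
  ∃ s, HasSumMod μ v s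

/-- The partial sums `∑_{i ∈ F} |v i|` of the pointwise norms of a family; the element `|v|₁`
of `ℓ₁(I, ℳ)` is the supremum of this set. -/
def l1PartialSums {I : Type*} (v : I → M) : Set (L0 μ) :=
  {g | ∃ F : Finset I, g = ∑ i ∈ F, pn μ (v i)}

/-- Membership in `ℓ₁(I, ℳ)`: the partial sums of the pointwise norms admit a supremum
(equivalently, an upper bound) in `L⁰(𝕏)`. -/
def Meml1 {I : Type*} (v : I → M) : Prop :=
  ∃ b, IsLUB (l1PartialSums μ v) b

/-- The partial sums `∑_{i ∈ F} |v i|` for an `L⁰(𝕏)`-valued family. -/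
def l1PartialSumsF {I : Type*} (v : I → L0 μ) : Set (L0 μ) :=
  {g | ∃ F : Finset I, g = ∑ i ∈ F, |v i|}

/-- Membership in `ℓ₁(I, L⁰(𝕏))`. -/
def Meml1F {I : Type*} (v : I → L0 μ) : Prop :=
  ∃ b, IsLUB (l1PartialSumsF μ v) b

/-- The set whose infimum defines the projective pointwise norm: all values
`∑_{i=1}^n |v_i||w_i|` over representations `α = ∑_{i=1}^n v_i ⊗ w_i`. -/
def piReps (α : M ⊗[L0 μ] N) : Set (L0 μ) :=
  {g | ∃ (n : ℕ) (v : Fin n → M) (w : Fin n → N),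
    α = ∑ i, v i ⊗ₜ[L0 μ] w i ∧ g = ∑ i, pn μ (v i) * pn μ (w i)}

/-- The set whose supremum defines the injective pointwise norm: all values
`|∑_{i=1}^n ω(v_i) η(w_i)|` over representations `α = ∑_{i=1}^n v_i ⊗ w_i` and elements
`ω ∈ 𝔻_{ℳ*}`, `η ∈ 𝔻_{𝒩*}`. -/
def epsReps (α : M ⊗[L0 μ] N) : Set (L0 μ) :=
  {g | ∃ (n : ℕ) (v : Fin n → M) (w : Fin n → N)
    (ω : M →ₗ[L0 μ] L0 μ) (η : N →ₗ[L0 μ] L0 μ), InDualDisc μ ω ∧ InDualDisc μ η ∧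
    α = ∑ i, v i ⊗ₜ[L0 μ] w i ∧ g = |∑ i, ω (v i) * η (w i)|}

/-- `IsPiTensor μ M N P e` states that the Banach `L⁰(𝕏)`-module `P`, together with the
`L⁰(𝕏)`-linear map `e` defined on the algebraic tensor product, realizes the projective
tensor product `ℳ ⊗̂_π 𝒩`: the pointwise norm of `e α` is the projective pointwise norm
`|α|_π` and the image of `e` is dense. -/
structure IsPiTensor (M N P : Type*) [AddCommGroup M] [Module (L0 μ) M] [BanachMod μ M]
    [AddCommGroup N] [Module (L0 μ) N] [BanachMod μ N]
    [AddCommGroup P] [Module (L0 μ) P] [BanachMod μ P]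
    (e : M ⊗[L0 μ] N →ₗ[L0 μ] P) : Prop where
  pn_emb : ∀ α : M ⊗[L0 μ] N, IsGLB (piReps μ α) (pn μ (e α))
  dense : ∀ p : P, ∀ ε : ℝ, 0 < ε → ∃ α : M ⊗[L0 μ] N, dM μ (e α) p < ε

/-- `IsEpsTensor μ M N P e` states that the Banach `L⁰(𝕏)`-module `P`, together with the
`L⁰(𝕏)`-linear map `e` defined on the algebraic tensor product, realizes the injective
tensor product `ℳ ⊗̂_ε 𝒩`: the pointwise norm of `e α` is the injective pointwise norm
`|α|_ε` and the image of `e` is dense. -/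
structure IsEpsTensor (M N P : Type*) [AddCommGroup M] [Module (L0 μ) M] [BanachMod μ M]
    [AddCommGroup N] [Module (L0 μ) N] [BanachMod μ N]
    [AddCommGroup P] [Module (L0 μ) P] [BanachMod μ P]
    (e : M ⊗[L0 μ] N →ₗ[L0 μ] P) : Prop where
  pn_emb : ∀ α : M ⊗[L0 μ] N, IsLUB (epsReps μ α) (pn μ (e α))
  dense : ∀ p : P, ∀ ε : ℝ, 0 < ε → ∃ α : M ⊗[L0 μ] N, dM μ (e α) p < ε

end Defs

/-! ### The ordered ring `L⁰` -/

section Aux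

variable {μ : Measure X}

instance L0.isOrderedAddMonoid : IsOrderedAddMonoid (L0 μ) where
  add_le_add_left a b h c := by
    rw [← AEEqFun.coeFn_le] at h ⊢
    filter_upwards [h, AEEqFun.coeFn_add a c, AEEqFun.coeFn_add b c] with x h h1 h2
    rw [h1, h2]
    simpa using h

lemma L0.mul_nonneg {f g : L0 μ} (hf : 0 ≤ f) (hg : 0 ≤ g) : 0 ≤ f * g := by
  rw [← AEEqFun.coeFn_le] at hf hg ⊢
  filter_upwards [hf, hg, AEEqFun.coeFn_mul f g, AEEqFun.coeFn_zero (α := X) (β := ℝ) (μ := μ)]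
    with x h1 h2 h3 h0
  rw [h0] at h1 h2 ⊢
  rw [h3]
  exact _root_.mul_nonneg h1 h2

lemma L0.mul_le_mul_left {f g h : L0 μ} (hh : 0 ≤ h) (hfg : f ≤ g) : h * f ≤ h * g := by
  have := L0.mul_nonneg hh (sub_nonneg.2 hfg)
  rwa [mul_sub, sub_nonneg] at this

lemma L0.mul_le_mul_right {f g h : L0 μ} (hh : 0 ≤ h) (hfg : f ≤ g) : f * h ≤ g * h := by
  rw [mul_comm f, mul_comm g]
  exact L0.mul_le_mul_left hh hfg

lemma L0.abs_mul (f g : L0 μ) : |f * g| = |f| * |g| := by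
  apply AEEqFun.ext
  filter_upwards [AEEqFun.coeFn_abs (f * g), AEEqFun.coeFn_abs f, AEEqFun.coeFn_abs g,
    AEEqFun.coeFn_mul f g, AEEqFun.coeFn_mul |f| |g|] with x h1 h2 h3 h4 h5
  rw [h1, h5, h4, Pi.mul_apply, Pi.mul_apply, h2, h3, _root_.abs_mul]

lemma L0.abs_add_le (f g : L0 μ) : |f + g| ≤ |f| + |g| := by
  rw [← AEEqFun.coeFn_le]
  filter_upwards [AEEqFun.coeFn_abs (f + g), AEEqFun.coeFn_abs f, AEEqFun.coeFn_abs g,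
    AEEqFun.coeFn_add f g, AEEqFun.coeFn_add |f| |g|] with x h1 h2 h3 h4 h5
  rw [h1, h5, h4, Pi.add_apply, Pi.add_apply, h2, h3]
  exact _root_.abs_add_le _ _

/-- The pointwise inverse on `L⁰`, with the convention `0⁻¹ = 0`; it exhibits `L⁰` as a
von Neumann regular ring. -/
def pinv (f : L0 μ) : L0 μ := AEEqFun.compMeasurable (fun t : ℝ => t⁻¹) measurable_inv f

lemma coeFn_pinv (f : L0 μ) : ⇑(pinv f) =ᵐ[μ] fun x => (f x)⁻¹ :=
  AEEqFun.coeFn_compMeasurable _ _ f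

lemma pinv_nonneg {f : L0 μ} (hf : 0 ≤ f) : 0 ≤ pinv f := by
  rw [← AEEqFun.coeFn_le] at hf ⊢
  filter_upwards [hf, coeFn_pinv f, AEEqFun.coeFn_zero (α := X) (β := ℝ) (μ := μ)]
    with x h1 h3 h0
  rw [h0] at h1 ⊢
  rw [h3]
  exact inv_nonneg.2 h1

lemma mul_pinv_mul (f : L0 μ) : f * pinv f * f = f := by
  apply AEEqFun.ext
  filter_upwards [coeFn_pinv f, AEEqFun.coeFn_mul f (pinv f),
    AEEqFun.coeFn_mul (f * pinv f) f] with x h1 h2 h3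
  rw [h3, Pi.mul_apply, h2, Pi.mul_apply, h1]
  exact mul_inv_mul_cancel _

lemma one_sub_mul_pinv_nonneg (f : L0 μ) : 0 ≤ 1 - f * pinv f := by
  rw [← AEEqFun.coeFn_le]
  filter_upwards [coeFn_pinv f, AEEqFun.coeFn_mul f (pinv f),
    AEEqFun.coeFn_sub 1 (f * pinv f), AEEqFun.coeFn_one (α := X) (β := ℝ) (μ := μ),
    AEEqFun.coeFn_zero (α := X) (β := ℝ) (μ := μ)] with x h1 h2 h3 h4 h5
  rw [h5, h3, Pi.sub_apply, h4, h2, Pi.mul_apply, h1]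
  simpa using mul_inv_le_one (a := f x)

lemma L0.one_nonneg : (0 : L0 μ) ≤ 1 := by
  rw [← AEEqFun.coeFn_le]
  filter_upwards [AEEqFun.coeFn_one (α := X) (β := ℝ) (μ := μ),
    AEEqFun.coeFn_zero (α := X) (β := ℝ) (μ := μ)] with x h4 h5
  rw [h4, h5]
  simp

lemma one_add_mul_pinv {f : L0 μ} (hf : 0 ≤ f) : (1 + f) * pinv (1 + f) = 1 := by
  apply AEEqFun.ext
  rw [← AEEqFun.coeFn_le] at hf
  filter_upwards [hf, coeFn_pinv (1 + f), AEEqFun.coeFn_mul (1 + f) (pinv (1 + f)),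
    AEEqFun.coeFn_add 1 f, AEEqFun.coeFn_one (α := X) (β := ℝ) (μ := μ),
    AEEqFun.coeFn_zero (α := X) (β := ℝ) (μ := μ)] with x h0 h1 h2 h3 h4 h5
  rw [h2, Pi.mul_apply, h1, h3, Pi.add_apply, h4]
  rw [h5] at h0
  have : (0 : ℝ) ≤ f x := h0
  simp only [Pi.one_apply]
  exact mul_inv_cancel₀ (by positivity)

/-- Multiplication by a nonnegative element commutes with infima: on `{g = 0}` the inequality
holds because `S` is nonempty, and on `{g > 0}` one divides by `g`. -/
lemma le_mul_glb {S : Set (L0 μ)} {b g h : L0 μ} (hS : S.Nonempty) (hb : IsGLB S b)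
    (hg : 0 ≤ g) (hh : ∀ a ∈ S, h ≤ g * a) : h ≤ g * b := by
  have he := one_sub_mul_pinv_nonneg g
  have hr := pinv_nonneg hg
  have key : pinv g * h + (1 - g * pinv g) * b ≤ b := by
    refine hb.2 fun a ha => ?_
    calc pinv g * h + (1 - g * pinv g) * b ≤ pinv g * (g * a) + (1 - g * pinv g) * a :=
          add_le_add (L0.mul_le_mul_left hr (hh a ha)) (L0.mul_le_mul_left he (hb.1 ha))
      _ = a := by ring
  have h2 := L0.mul_le_mul_left hg key
  obtain ⟨a, ha⟩ := hS
  have h3 : (1 - g * pinv g) * h ≤ 0 := by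
    calc (1 - g * pinv g) * h ≤ (1 - g * pinv g) * (g * a) := L0.mul_le_mul_left he (hh a ha)
      _ = (g - g * pinv g * g) * a := by ring
      _ = 0 := by rw [mul_pinv_mul]; ring
  calc h = (1 - g * pinv g) * h + g * (pinv g * h + (1 - g * pinv g) * b)
        - (g - g * pinv g * g) * b := by ring
    _ ≤ 0 + g * b - (g - g * pinv g * g) * b :=
        sub_le_sub_right (add_le_add h3 h2) _
    _ = g * b := by rw [mul_pinv_mul]; ring

lemma mul_lub_le {S : Set (L0 μ)} {b g h : L0 μ} (hS : S.Nonempty) (hb : IsLUB S b)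
    (hg : 0 ≤ g) (hh : ∀ a ∈ S, g * a ≤ h) : g * b ≤ h := by
  have := le_mul_glb (h := -h) hS.neg hb.neg hg fun a ha => by
    have := neg_le_neg (hh _ ha)
    rwa [mul_neg, neg_neg] at this
  rwa [mul_neg, neg_le_neg_iff] at this

/-- `L⁰` is Dedekind complete. After subtracting an element `s₀` of the family, the densities
`s - s₀` define measures; their supremum in the complete lattice of measures is dominated by a
σ-finite measure and its Radon-Nikodym derivative is the required supremum. -/
lemma exists_lub [SigmaFinite μ] {S : Set (L0 μ)} (hS : S.Nonempty) (hb : BddAbove S) :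
    ∃ b, IsLUB S b := by
  obtain ⟨s₀, hs₀⟩ := hS
  obtain ⟨H, hH⟩ := hb
  let D : L0 μ → Measure X := fun s => μ.withDensity fun x => ENNReal.ofReal (s x - s₀ x)
  let m : Measure X := ⨆ s ∈ S, D s
  have hD : ∀ h ∈ upperBounds S, m ≤ D h := by
    intro h hh
    refine iSup₂_le fun s hs => withDensity_mono ?_
    filter_upwards [AEEqFun.coeFn_le.2 (hh hs)] with x hx
    exact ENNReal.ofReal_le_ofReal (sub_le_sub_right hx _)
  have hmeas : ∀ s : L0 μ, AEMeasurable (fun x => ENNReal.ofReal (s x - s₀ x)) μ := fun s =>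
    (s.aestronglyMeasurable.aemeasurable.sub s₀.aestronglyMeasurable.aemeasurable).ennreal_ofReal
  have : SigmaFinite m := Measure.sigmaFinite_of_le (D H) (hD H hH)
  have hac : m ≪ μ := (Measure.absolutelyContinuous_of_le (hD H hH)).trans
    (withDensity_absolutelyContinuous _ _)
  have hd : μ.withDensity (m.rnDeriv μ) = m := Measure.withDensity_rnDeriv_eq m μ hac
  have hdm : Measurable (m.rnDeriv μ) := Measure.measurable_rnDeriv m μ
  have hle : ∀ {f g : X → ENNReal}, AEMeasurable f μ → μ.withDensity f ≤ μ.withDensity g →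
      f ≤ᵐ[μ] g := by
    intro f g hf h
    refine ae_le_of_forall_setLIntegral_le_of_sigmaFinite₀ hf fun s hs _ => ?_
    rw [← withDensity_apply _ hs, ← withDensity_apply _ hs]
    exact h s
  let d : L0 μ := AEEqFun.mk (fun x => (m.rnDeriv μ x).toReal)
    hdm.ennreal_toReal.aestronglyMeasurable
  have hdc : ⇑d =ᵐ[μ] fun x => (m.rnDeriv μ x).toReal := AEEqFun.coeFn_mk _ _
  refine ⟨s₀ + d, fun s hs => ?_, fun h hh => ?_⟩
  · have h1 : (fun x => ENNReal.ofReal (s x - s₀ x)) ≤ᵐ[μ] m.rnDeriv μ :=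
      hle (hmeas s) ((le_iSup₂ (f := fun s (_ : s ∈ S) => D s) s hs).trans hd.ge)
    rw [← AEEqFun.coeFn_le]
    filter_upwards [h1, hdc, AEEqFun.coeFn_add s₀ d, Measure.rnDeriv_lt_top m μ]
      with x h1 h2 h3 h4
    rw [h3, Pi.add_apply, h2]
    have := (ENNReal.ofReal_le_iff_le_toReal h4.ne).1 h1
    linarith
  · have h1 : m.rnDeriv μ ≤ᵐ[μ] fun x => ENNReal.ofReal (h x - s₀ x) :=
      hle hdm.aemeasurable (hd.le.trans (hD h hh))
    rw [← AEEqFun.coeFn_le]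
    filter_upwards [h1, hdc, AEEqFun.coeFn_add s₀ d, AEEqFun.coeFn_le.2 (hh hs₀)]
      with x h1 h2 h3 h4
    rw [h3, Pi.add_apply, h2]
    have := ENNReal.toReal_le_of_le_ofReal (sub_nonneg.2 h4) h1
    linarith

lemma exists_glb [SigmaFinite μ] {S : Set (L0 μ)} (hS : S.Nonempty) (hb : BddBelow S) :
    ∃ b, IsGLB S b := by
  obtain ⟨b, h⟩ := exists_lub hS.neg hb.neg
  exact ⟨-b, by simpa using h.neg⟩

/-! ### The Hahn-Banach theorem over `L⁰` -/

section HahnBanach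

variable {M : Type*} [AddCommGroup M] [Module (L0 μ) M]

/-- An `L⁰`-sublinear map. Only the inequality `q (f • v) ≤ f * q v` is required for `f ≥ 0`;
equality follows, see `IsSublin.smul_eq`. -/
def IsSublin (q : M → L0 μ) : Prop :=
  (∀ v w, q (v + w) ≤ q v + q w) ∧ ∀ (f : L0 μ) v, 0 ≤ f → q (f • v) ≤ f * q v

lemma IsSublin.zero_nonneg {q : M → L0 μ} (hq : IsSublin q) : 0 ≤ q 0 := by
  have := hq.1 0 0
  rw [add_zero] at this
  exact le_add_iff_nonneg_left _ |>.1 this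

lemma IsSublin.neg_le {q : M → L0 μ} (hq : IsSublin q) (v : M) : -q (-v) ≤ q v := by
  have := hq.1 v (-v)
  rw [add_neg_cancel] at this
  exact neg_le_iff_add_nonneg.2 (hq.zero_nonneg.trans this)

/-- The reverse inequality comes from applying the definition to `pinv f`, and to the
idempotents `f * pinv f` and `1 - f * pinv f`. -/
lemma IsSublin.smul_eq {q : M → L0 μ} (hq : IsSublin q) {f : L0 μ} (hf : 0 ≤ f) (v : M) :
    q (f • v) = f * q v := by
  refine le_antisymm (hq.2 f v hf) ?_
  set e := f * pinv f with he
  have hef : e * f = f := mul_pinv_mul f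
  have he0 : 0 ≤ 1 - e := one_sub_mul_pinv_nonneg f
  have h1 : f * q (e • v) ≤ e * q (f • v) := by
    have := L0.mul_le_mul_left hf (hq.2 (pinv f) (f • v) (pinv_nonneg hf))
    rwa [smul_smul, mul_comm (pinv f) f, ← mul_assoc] at this
  have h2 : q v ≤ q (e • v) + (1 - e) * q v := by
    calc q v = q (e • v + (1 - e) • v) := by rw [← add_smul]; simp
      _ ≤ _ := (hq.1 _ _).trans (add_le_add le_rfl (hq.2 _ _ he0))
  have h3 : f * q v ≤ f * q (e • v) := by
    have := L0.mul_le_mul_left hf h2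
    have h4 : f * (q (e • v) + (1 - e) * q v) = f * q (e • v) + (f - e * f) * q v := by ring
    rwa [h4, hef, sub_self, zero_mul, add_zero] at this
  have h5 : 0 ≤ (1 - e) * q (f • v) := by
    have := hq.2 (1 - e) (f • v) he0
    rw [smul_smul, sub_mul, hef, one_mul, sub_self, zero_smul] at this
    exact hq.zero_nonneg.trans this
  calc f * q v ≤ e * q (f • v) := h3.trans h1
    _ ≤ e * q (f • v) + (1 - e) * q (f • v) := le_add_of_nonneg_right h5
    _ = q (f • v) := by ring

/-- Lowering of a sublinear map in direction `x`: the infimum over `f ≥ 0` of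
`q (v + f • x) - f * q x` is again sublinear. -/
lemma IsSublin.exists_shift [SigmaFinite μ] {q : M → L0 μ} (hq : IsSublin q) (x : M) :
    ∃ q' : M → L0 μ, IsSublin q' ∧ ∀ v, ∀ f : L0 μ, 0 ≤ f → q' v ≤ q (v + f • x) - f * q x := by
  let S : M → Set (L0 μ) := fun v => {a | ∃ f : L0 μ, 0 ≤ f ∧ a = q (v + f • x) - f * q x}
  have hne : ∀ v, (S v).Nonempty := fun v => ⟨_, 0, le_rfl, rfl⟩
  have hbd : ∀ v, BddBelow (S v) := by
    rintro v
    refine ⟨-q (-v), ?_⟩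
    rintro _ ⟨f, hf, rfl⟩
    have := hq.1 (v + f • x) (-v)
    rw [add_neg_cancel_comm, hq.smul_eq hf] at this
    rw [le_sub_iff_add_le, neg_add_le_iff_le_add, add_comm]
    exact this
  choose q' hq' using fun v => exists_glb (hne v) (hbd v)
  have hle : ∀ v, ∀ f : L0 μ, 0 ≤ f → q' v ≤ q (v + f • x) - f * q x := fun v f hf =>
    (hq' v).1 ⟨f, hf, rfl⟩
  refine ⟨q', ⟨fun v w => ?_, fun g v hg => ?_⟩, hle⟩
  · rw [← sub_le_iff_le_add]
    refine (hq' v).2 ?_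
    rintro _ ⟨f, hf, rfl⟩
    rw [sub_le_iff_le_add, ← sub_le_iff_le_add']
    refine (hq' w).2 ?_
    rintro _ ⟨g, hg, rfl⟩
    rw [sub_le_iff_le_add']
    refine (hle (v + w) (f + g) (add_nonneg hf hg)).trans ?_
    have h1 := hq.1 (v + f • x) (w + g • x)
    have h2 : v + f • x + (w + g • x) = v + w + (f + g) • x := by rw [add_smul]; abel
    rw [h2] at h1
    calc _ ≤ q (v + f • x) + q (w + g • x) - (f + g) * q x := sub_le_sub_right h1 _
      _ = _ := by ring
  · refine le_mul_glb (hne v) (hq' v) hg ?_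
    rintro _ ⟨f, hf, rfl⟩
    refine (hle (g • v) (g * f) (L0.mul_nonneg hg hf)).trans ?_
    rw [mul_smul, ← smul_add, hq.smul_eq hg]
    exact le_of_eq (by ring)

/-- Every sublinear map dominates a linear one: by Zorn there is a minimal sublinear map below
it, and invariance of a minimal map under the lowering `IsSublin.exists_shift` forces
additivity. -/
lemma IsSublin.exists_linear [SigmaFinite μ] {p : M → L0 μ} (hp : IsSublin p) :
    ∃ ω : M →ₗ[L0 μ] L0 μ, ∀ v, ω v ≤ p v := by
  obtain ⟨q, hq⟩ := zorn_le₀ (α := (M → L0 μ)ᵒᵈ)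
    {q | IsSublin (OrderDual.ofDual q) ∧ OrderDual.ofDual q ≤ p} (by
    intro c hc hchain
    rcases c.eq_empty_or_nonempty with rfl | ⟨q₀, hq₀⟩
    · exact ⟨OrderDual.toDual p, ⟨hp, le_rfl⟩, by simp⟩
    let S : M → Set (L0 μ) := fun v => {a | ∃ q ∈ c, a = OrderDual.ofDual q v}
    have hne : ∀ v, (S v).Nonempty := fun v => ⟨_, q₀, hq₀, rfl⟩
    have hbd : ∀ v, BddBelow (S v) := by
      rintro v
      refine ⟨-p (-v), ?_⟩
      rintro _ ⟨q, hq, rfl⟩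
      exact (neg_le_neg ((hc hq).2 (-v))).trans ((hc hq).1.neg_le v)
    choose q' hq' using fun v => exists_glb (hne v) (hbd v)
    have hle : ∀ v, ∀ q ∈ c, q' v ≤ OrderDual.ofDual q v := fun v q h => (hq' v).1 ⟨q, h, rfl⟩
    refine ⟨OrderDual.toDual q', ⟨⟨fun v w => ?_, fun g v hg => ?_⟩, fun v => ?_⟩, ?_⟩
    · change q' (v + w) ≤ q' v + q' w
      rw [← sub_le_iff_le_add]
      refine (hq' v).2 ?_
      rintro _ ⟨q₁, h₁, rfl⟩
      rw [sub_le_iff_le_add, ← sub_le_iff_le_add']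
      refine (hq' w).2 ?_
      rintro _ ⟨q₂, h₂, rfl⟩
      rw [sub_le_iff_le_add']
      rcases hchain.total h₁ h₂ with h | h
      · have h : OrderDual.ofDual q₂ ≤ OrderDual.ofDual q₁ := h
        exact (hle _ _ h₂).trans (((hc h₂).1.1 v w).trans (add_le_add (h v) le_rfl))
      · have h : OrderDual.ofDual q₁ ≤ OrderDual.ofDual q₂ := h
        exact (hle _ _ h₁).trans (((hc h₁).1.1 v w).trans (add_le_add le_rfl (h w)))
    · change q' (g • v) ≤ g * q' v
      refine le_mul_glb (hne v) (hq' v) hg ?_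
      rintro _ ⟨q, h, rfl⟩
      exact (hle _ _ h).trans ((hc h).1.2 g v hg)
    · exact (hle v q₀ hq₀).trans ((hc hq₀).2 v)
    · exact fun q h v => hle v q h)
  obtain ⟨⟨hs, hqp⟩, hmin⟩ := hq
  set r : M → L0 μ := OrderDual.ofDual q with hr
  have hadd : ∀ v x, r (v + x) = r v + r x := by
    intro v x
    refine le_antisymm (hs.1 v x) ?_
    obtain ⟨q', hq', hle⟩ := hs.exists_shift x
    have h1 : q' ≤ r := fun v => by simpa using hle v 0 le_rfl
    have h2 : r ≤ q' := hmin (y := OrderDual.toDual q') ⟨hq', h1.trans hqp⟩ h1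
    have h3 := (h2 v).trans (hle v 1 L0.one_nonneg)
    rw [one_smul, one_mul, le_sub_iff_add_le] at h3
    exact h3
  have hneg : ∀ v, r (-v) = -r v := by
    intro v
    have h0 : r 0 = 0 := by simpa using hadd 0 0
    have := hadd v (-v)
    rw [add_neg_cancel, h0] at this
    exact (neg_eq_of_add_eq_zero_right this.symm).symm
  refine ⟨⟨⟨r, hadd⟩, fun f v => ?_⟩, hqp⟩
  change r (f • v) = f * r v
  have hf : f = f⁺ - f⁻ := (posPart_sub_negPart f).symm
  rw [hf, sub_smul, sub_eq_add_neg, hadd, hneg, hs.smul_eq (posPart_nonneg f),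
    hs.smul_eq (negPart_nonneg f)]
  ring

end HahnBanach

end Aux

section Norm

variable {μ : Measure X} [SigmaFinite μ]
variable {M N : Type*} [AddCommGroup M] [Module (L0 μ) M] [BanachMod μ M]
  [AddCommGroup N] [Module (L0 μ) N] [BanachMod μ N]

lemma pn_smul' (f : L0 μ) (v : M) : pn μ (f • v) = |f| * pn μ v := BanachMod.pn_smul f v

lemma pn_nonneg' (v : M) : 0 ≤ pn μ v := BanachMod.pn_nonneg v

lemma pn_neg' (v : M) : pn μ (-v) = pn μ v := by
  have := pn_smul' (-1 : L0 μ) v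
  rwa [neg_one_smul, abs_neg, abs_of_nonneg L0.one_nonneg, one_mul] at this

lemma isSublin_pn : IsSublin (pn μ : M → L0 μ) :=
  ⟨BanachMod.pn_add_le, fun f v hf => by rw [pn_smul', abs_of_nonneg hf]⟩

/-- The pointwise norm is attained by a functional in the unit disc of the dual. -/
lemma exists_norming (x : M) : ∃ ω : M →ₗ[L0 μ] L0 μ, InDualDisc μ ω ∧ ω x = pn μ x := by
  obtain ⟨q, hq, hle⟩ := (isSublin_pn (μ := μ) (M := M)).exists_shift x
  obtain ⟨ω, hω⟩ := hq.exists_linear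
  have h1 : ∀ v, ω v ≤ pn μ v := fun v => (hω v).trans (by simpa using hle v 0 le_rfl)
  have h0 : pn μ (0 : M) = 0 := (BanachMod.pn_eq_zero _).2 rfl
  refine ⟨ω, fun v => abs_le'.2 ⟨h1 v, ?_⟩, le_antisymm (h1 x) ?_⟩
  · rw [← map_neg, ← pn_neg' v]
    exact h1 _
  · have := (hω (-x)).trans (hle (-x) 1 L0.one_nonneg)
    rw [one_smul, neg_add_cancel, h0, one_mul, zero_sub, map_neg, neg_le_neg_iff] at this
    exact this

/-! ### The injective pointwise norm -/

/-- The functional `ω ⊗ η` on the algebraic tensor product. -/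
def evalPair (ω : M →ₗ[L0 μ] L0 μ) (η : N →ₗ[L0 μ] L0 μ) : M ⊗[L0 μ] N →ₗ[L0 μ] L0 μ :=
  LinearMap.mul' (L0 μ) (L0 μ) ∘ₗ TensorProduct.map ω η

lemma evalPair_tmul (ω : M →ₗ[L0 μ] L0 μ) (η : N →ₗ[L0 μ] L0 μ) (v : M) (w : N) :
    evalPair ω η (v ⊗ₜ w) = ω v * η w := by
  simp [evalPair]

/-- The values in `epsReps` do not depend on the representation of the tensor. -/
lemma mem_epsReps {α : M ⊗[L0 μ] N} {g : L0 μ} : g ∈ epsReps μ α ↔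
    ∃ ω η, InDualDisc μ ω ∧ InDualDisc μ η ∧ g = |evalPair ω η α| := by
  constructor
  · rintro ⟨n, v, w, ω, η, hω, hη, rfl, rfl⟩
    exact ⟨ω, η, hω, hη, by simp only [map_sum, evalPair_tmul]⟩
  · rintro ⟨ω, η, hω, hη, rfl⟩
    obtain ⟨n, v, w, rfl⟩ := TensorProduct.exists_sum_tmul_eq α
    exact ⟨n, v, w, ω, η, hω, hη, rfl, by simp only [map_sum, evalPair_tmul]⟩

lemma inDualDisc_zero : InDualDisc μ (0 : M →ₗ[L0 μ] L0 μ) := fun v => by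
  simpa using pn_nonneg' v

lemma epsReps_nonempty (α : M ⊗[L0 μ] N) : (epsReps μ α).Nonempty :=
  ⟨_, mem_epsReps.2 ⟨0, 0, inDualDisc_zero, inDualDisc_zero, rfl⟩⟩

lemma abs_mul_le_pn {ω : M →ₗ[L0 μ] L0 μ} {η : N →ₗ[L0 μ] L0 μ} (hω : InDualDisc μ ω)
    (hη : InDualDisc μ η) (v : M) (w : N) : |ω v * η w| ≤ pn μ v * pn μ w := by
  rw [L0.abs_mul]
  exact (L0.mul_le_mul_right (abs_nonneg _) (hω v)).trans
    (L0.mul_le_mul_left (pn_nonneg' v) (hη w))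

lemma epsReps_bddAbove (α : M ⊗[L0 μ] N) : BddAbove (epsReps μ α) := by
  obtain ⟨b, hb⟩ : ∃ b : L0 μ, ∀ ω η, InDualDisc μ ω → InDualDisc μ η →
      |evalPair ω η α| ≤ b := by
    induction α with
    | zero => exact ⟨0, fun ω η _ _ => by simp⟩
    | tmul v w =>
      exact ⟨pn μ v * pn μ w, fun ω η hω hη => by
        rw [evalPair_tmul]; exact abs_mul_le_pn hω hη v w⟩
    | add x y hx hy =>
      obtain ⟨a, ha⟩ := hx
      obtain ⟨b, hb⟩ := hy
      exact ⟨a + b, fun ω η hω hη => by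
        rw [map_add]
        exact (L0.abs_add_le _ _).trans (add_le_add (ha ω η hω hη) (hb ω η hω hη))⟩
  refine ⟨b, fun g hg => ?_⟩
  obtain ⟨ω, η, hω, hη, rfl⟩ := mem_epsReps.1 hg
  exact hb ω η hω hη

/-- A sum of elementary tensors vanishes as soon as all its contractions by bounded functionals
do. The induction splits off the first vector `x = v 0`: with a norming functional `ω₁` of `x`,
`P u = (ω₁ u / |x|) • x` is a bounded projection onto the span of `x`. The `P`-part of the sum is
`x ⊗ (∑ ω₁ (v i) • w i) / |x| = 0`, and the complementary part has one term less and satisfies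
the same hypothesis, since `ω ∘ (1 - P)` is bounded whenever `ω` is. -/
lemma sum_tmul_eq_zero : ∀ (n : ℕ) (v : Fin n → M) (w : Fin n → N),
    (∀ ω : M →ₗ[L0 μ] L0 μ, IsDual μ ω → ∑ i, ω (v i) • w i = 0) →
    ∑ i, v i ⊗ₜ[L0 μ] w i = 0 := by
  intro n
  induction n with
  | zero => simp
  | succ n ih =>
    intro v w h
    set x := v 0 with hx
    obtain ⟨ω₁, hω₁, hω₁x⟩ := exists_norming (μ := μ) x
    let r := pinv (pn μ x)
    let P : M →ₗ[L0 μ] M := (r • ω₁).smulRight x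
    have hP : ∀ u, P u = (r * ω₁ u) • x := fun u => rfl
    have hPx : P x = x := by
      rw [hP, hω₁x, ← sub_eq_zero, ← BanachMod.pn_eq_zero (μ := μ)]
      change pn μ _ = 0
      have h1 : (r * pn μ x) • x - x = (r * pn μ x - 1) • x := by rw [sub_smul, one_smul]
      rw [h1, pn_smul', ← abs_of_nonneg (pn_nonneg' (μ := μ) x), ← L0.abs_mul,
        abs_of_nonneg (pn_nonneg' (μ := μ) x), sub_mul, mul_comm r, mul_pinv_mul]
      simp
    have hsplit : ∀ i, v i ⊗ₜ[L0 μ] w i =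
        (v i - P (v i)) ⊗ₜ[L0 μ] w i + x ⊗ₜ[L0 μ] (r • (ω₁ (v i) • w i)) := by
      intro i
      rw [TensorProduct.sub_tmul, hP, smul_smul, TensorProduct.smul_tmul, sub_add_cancel]
    have hb1 : IsDual μ ω₁ := ⟨1, L0.one_nonneg, fun u => by simpa using hω₁ u⟩
    rw [Finset.sum_congr rfl fun i _ => hsplit i, Finset.sum_add_distrib,
      ← TensorProduct.tmul_sum, ← Finset.smul_sum, h ω₁ hb1, smul_zero, TensorProduct.tmul_zero,
      add_zero, Fin.sum_univ_succ, ← hx, hPx, sub_self, TensorProduct.zero_tmul, zero_add]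
    refine ih _ _ fun ω hω => ?_
    obtain ⟨g, hg0, hg⟩ := hω
    have hb : IsDual μ (ω ∘ₗ (LinearMap.id - P)) := by
      refine ⟨g + |r| * |ω x|, add_nonneg hg0 (L0.mul_nonneg (abs_nonneg _) (abs_nonneg _)),
        fun u => ?_⟩
      have h1 : (ω ∘ₗ (LinearMap.id - P)) u = ω u + -(r * ω₁ u * ω x) := by
        simp [hP, sub_eq_add_neg]
      rw [h1]
      refine (L0.abs_add_le _ _).trans ?_
      rw [abs_neg, add_mul]
      refine add_le_add (hg u) ?_
      rw [L0.abs_mul, L0.abs_mul]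
      calc |r| * |ω₁ u| * |ω x| = (|r| * |ω x|) * |ω₁ u| := by ring
        _ ≤ _ := L0.mul_le_mul_left (L0.mul_nonneg (abs_nonneg _) (abs_nonneg _)) (hω₁ u)
    have := h _ hb
    rw [Fin.sum_univ_succ, ← hx] at this
    simpa [hPx] using this

lemma eq_zero_of_evalPair {α : M ⊗[L0 μ] N}
    (h : ∀ ω η, InDualDisc μ ω → InDualDisc μ η → evalPair ω η α = 0) : α = 0 := by
  obtain ⟨n, v, w, rfl⟩ := TensorProduct.exists_sum_tmul_eq α
  refine sum_tmul_eq_zero n v w fun ω ⟨g, hg0, hg⟩ => ?_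
  -- rescale `ω` by `1 / (1 + g)` into the unit disc
  have h1g : (0 : L0 μ) ≤ 1 + g := add_nonneg L0.one_nonneg hg0
  set r := pinv (1 + g) with hr
  have hr0 : 0 ≤ r := pinv_nonneg h1g
  have hr1 : (1 + g) * r = 1 := one_add_mul_pinv hg0
  have hd : InDualDisc μ (r • ω) := fun u => by
    change |r * ω u| ≤ _
    rw [L0.abs_mul, abs_of_nonneg hr0]
    calc r * |ω u| ≤ r * (g * pn μ u) := L0.mul_le_mul_left hr0 (hg u)
      _ ≤ r * (g * pn μ u) + r * pn μ u := le_add_of_nonneg_right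
          (L0.mul_nonneg hr0 (pn_nonneg' u))
      _ = (1 + g) * r * pn μ u := by ring
      _ = pn μ u := by rw [hr1, one_mul]
  set y := ∑ i, (r • ω) (v i) • w i with hy
  obtain ⟨η, hη, hηy⟩ := exists_norming (μ := μ) y
  have h2 : pn μ y = 0 := by
    rw [← hηy, ← h _ _ hd hη, hy]
    simp only [map_sum, evalPair_tmul, map_smul, smul_eq_mul]
  have h3 : y = 0 := (BanachMod.pn_eq_zero y).1 h2
  have h4 : ∑ i, ω (v i) • w i = (1 + g) • y := by
    rw [hy, Finset.smul_sum]
    refine Finset.sum_congr rfl fun i _ => ?_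
    rw [LinearMap.smul_apply, smul_smul, smul_eq_mul, ← mul_assoc, hr1, one_mul]
  rw [h4, h3, smul_zero]

end Norm

/-- Let `𝕏` be a σ-finite measure space and `ℳ`, `𝒩` Banach
`L⁰(𝕏)`-modules. The injective pointwise norm `|α|_ε := ⋁ { |∑_{i=1}^n ω(v_i) η(w_i)| :
α = ∑_{i=1}^n v_i ⊗ w_i, ω ∈ 𝔻_{ℳ*}, η ∈ 𝔻_{𝒩*} }` (the supremum, which exists) is a
pointwise norm on `ℳ ⊗ 𝒩`, and `|v ⊗ w|_ε = |v||w|`. -/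
theorem injective_pointwise_norm
    (μ : Measure X) [SigmaFinite μ]
    (M : Type*) [AddCommGroup M] [Module (L0 μ) M] [BanachMod μ M]
    (N : Type*) [AddCommGroup N] [Module (L0 μ) N] [BanachMod μ N]
    :
    -- existence of the supremum
    (∀ α : M ⊗[L0 μ] N, ∃ b : L0 μ, IsLUB (epsReps μ α) b)
    -- nonnegativity
    ∧ (∀ (α : M ⊗[L0 μ] N) (b : L0 μ), IsLUB (epsReps μ α) b → 0 ≤ b)
    -- `|α|_ε = 0` iff `α = 0`
    ∧ (∀ (α : M ⊗[L0 μ] N) (b : L0 μ), IsLUB (epsReps μ α) b → (b = 0 ↔ α = 0))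
    -- subadditivity
    ∧ (∀ (α β : M ⊗[L0 μ] N) (a b c : L0 μ), IsLUB (epsReps μ α) a → IsLUB (epsReps μ β) b →
        IsLUB (epsReps μ (α + β)) c → c ≤ a + b)
    -- homogeneity
    ∧ (∀ (f : L0 μ) (α : M ⊗[L0 μ] N) (a c : L0 μ), IsLUB (epsReps μ α) a →
        IsLUB (epsReps μ (f • α)) c → c = |f| * a)
    -- value on elementary tensors
    ∧ (∀ (v : M) (w : N) (b : L0 μ), IsLUB (epsReps μ (v ⊗ₜ[L0 μ] w)) b →
        b = pn μ v * pn μ w) := by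
  refine ⟨fun α => exists_lub (epsReps_nonempty α) (epsReps_bddAbove α), ?_, ?_, ?_, ?_, ?_⟩
  · intro α b hb
    obtain ⟨g, hg⟩ := epsReps_nonempty α
    refine le_trans ?_ (hb.1 hg)
    obtain ⟨ω, η, -, -, rfl⟩ := mem_epsReps.1 hg
    exact abs_nonneg _
  · intro α b hb
    constructor
    · rintro rfl
      refine eq_zero_of_evalPair fun ω η hω hη => ?_
      have := hb.1 (mem_epsReps.2 ⟨ω, η, hω, hη, rfl⟩)
      exact le_antisymm ((le_abs_self _).trans this)
        (neg_nonpos.1 ((neg_le_abs _).trans this))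
    · rintro rfl
      refine hb.unique ?_
      have : epsReps μ (0 : M ⊗[L0 μ] N) = {0} := by
        refine (epsReps_nonempty _).subset_singleton_iff.1 fun g hg => ?_
        obtain ⟨ω, η, -, -, rfl⟩ := mem_epsReps.1 hg
        simp
      rw [this]
      exact isLUB_singleton
  · intro α β a b c ha hb hc
    refine hc.2 fun g hg => ?_
    obtain ⟨ω, η, hω, hη, rfl⟩ := mem_epsReps.1 hg
    rw [map_add]
    exact (L0.abs_add_le _ _).trans (add_le_add (ha.1 (mem_epsReps.2 ⟨ω, η, hω, hη, rfl⟩))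
      (hb.1 (mem_epsReps.2 ⟨ω, η, hω, hη, rfl⟩)))
  · intro f α a c ha hc
    have hev : ∀ (ω : M →ₗ[L0 μ] L0 μ) (η : N →ₗ[L0 μ] L0 μ),
        |evalPair ω η (f • α)| = |f| * |evalPair ω η α| := fun ω η => by
      rw [map_smul, smul_eq_mul, L0.abs_mul]
    refine le_antisymm (hc.2 fun g hg => ?_)
      (mul_lub_le (epsReps_nonempty α) ha (abs_nonneg f) fun g hg => ?_)
    · obtain ⟨ω, η, hω, hη, rfl⟩ := mem_epsReps.1 hg
      rw [hev]
      exact L0.mul_le_mul_left (abs_nonneg f) (ha.1 (mem_epsReps.2 ⟨ω, η, hω, hη, rfl⟩))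
    · obtain ⟨ω, η, hω, hη, rfl⟩ := mem_epsReps.1 hg
      rw [← hev]
      exact hc.1 (mem_epsReps.2 ⟨ω, η, hω, hη, rfl⟩)
  · intro v w b hb
    refine le_antisymm (hb.2 fun g hg => ?_) ?_
    · obtain ⟨ω, η, hω, hη, rfl⟩ := mem_epsReps.1 hg
      rw [evalPair_tmul]
      exact abs_mul_le_pn hω hη v w
    · obtain ⟨ω, hω, hv⟩ := exists_norming (μ := μ) v
      obtain ⟨η, hη, hw⟩ := exists_norming (μ := μ) w
      refine le_trans (le_abs_self _) (hb.1 (mem_epsReps.2 ⟨ω, η, hω, hη, ?_⟩))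
      rw [evalPair_tmul, hv, hw]

end Paper
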